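/- (Calibration of quantum conformal prediction, QCP, for regression) Let X be a measurable space. Let κ be a Markov kernel from X to ℝ^M (modeling the joint distribution of M measurement shots of a pre-trained quantum model, allowing arbitrary correlation and drift across the M shots). Let (x_1, y_1), …, (x_N, y_N), (x_{N+1}, y_{N+1}) be i.i.d. random pairs in X × ℝ, and, conditionally independently given the pairs, for each i = 1, …, N+1 draw the M-tuple of predictions (ŷ_i^1, …, ŷ_i^M) ∼ κ(x_i, ·). Fix an integer k with 1 ≤ k ≤ M and define the score s(y, (ŷ^1, …, ŷ^M)) as the k-th smallest value among the distances |y − ŷ^1|, …, |y − ŷ^M|. For α ∈ (0,1) with α ≥ 1/(N+1), let Q_{1−α} be the ⌈(1−α)(N+1)⌉-th smallest value among the calibration scores s(y_i, (ŷ_i^1, …, ŷ_i^M)), i = 1, …, N. Define Γ_M(x_{N+1}) = { y' ∈ ℝ : s(y', (ŷ_{N+1}^1, …, ŷ_{N+1}^M)) ≤ Q_{1−α} }. Then Pr( y_{N+1} ∈ Γ_M(x_{N+1}) ) ≥ 1 − α, where the probability is over the calibration data, the test point, and all random predictions. -/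

import Mathlib

open MeasureTheory ProbabilityTheory

/-- The `k`-th smallest value (counting multiplicities) of a list of reals:
the `k`-th entry of the list sorted in nondecreasing order. -/
noncomputable def kthSmallest (l : List ℝ) (k : ℕ) : ℝ :=
  (l.mergeSort (fun a b => @decide (a ≤ b) (Classical.propDecidable _))).getD (k - 1) 0

theorem qcp_sorted_aux (p : ℝ → Bool) (hp : ∀ a b, a ≤ b → p b = true → p a = true) :
    ∀ (l : List ℝ), l.Pairwise (· ≤ ·) → ∀ k, k < l.length →
      (p (l.getD k 0) = true ↔ k < l.countP p) := by
  intro l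
  induction l with
  | nil => intro _ k hk; simp at hk
  | cons a t ih =>
    intro hl k hk
    rw [List.pairwise_cons] at hl
    by_cases ha : p a = true
    · cases k with
      | zero => simp [ha]
      | succ k =>
        have := ih hl.2 k (by simpa using hk)
        simp only [List.getD_cons_succ, List.countP_cons, ha, if_true]
        rw [this]; omega
    · have h0 : t.countP p = 0 := by
        rw [List.countP_eq_zero]
        intro b hb hpb
        exact ha (hp a b (hl.1 b hb) hpb)
      have h1 : (a :: t).countP p = 0 := by simp [h0, ha]
      rw [h1]
      constructor
      · intro h
        exfalso
        have hm : (a :: t).getD k 0 ∈ a :: t := by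
          rw [List.getD_eq_getElem _ _ hk]; exact List.getElem_mem _
        rw [List.countP_eq_zero] at h1
        exact h1 _ hm h
      · omega

theorem qcp_countP_ofFn (p : ℝ → Bool) : ∀ (n : ℕ) (f : Fin n → ℝ),
    (List.ofFn f).countP p = ∑ i, if p (f i) = true then 1 else 0 := by
  intro n
  induction n with
  | zero => intro f; simp
  | succ n ih =>
    intro f
    rw [List.ofFn_succ, List.countP_cons, ih, Fin.sum_univ_succ, add_comm]

theorem qcp_kth (p : ℝ → Bool) (hp : ∀ a b, a ≤ b → p b = true → p a = true)
    {n : ℕ} (f : Fin n → ℝ) (k : ℕ) (hk1 : 1 ≤ k) (hk : k ≤ n) :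
    (p (kthSmallest (List.ofFn f) k) = true ↔ k ≤ ∑ i, if p (f i) = true then 1 else 0) := by
  unfold kthSmallest
  rw [qcp_sorted_aux p hp, (List.mergeSort_perm _ _).countP_eq, qcp_countP_ofFn]
  · omega
  · have := List.pairwise_mergeSort
      (le := fun a b : ℝ => @decide (a ≤ b) (Classical.propDecidable _))
      (by intro a b c; simpa using le_trans) (by intro a b; simpa using le_total a b)
      (List.ofFn f)
    simpa using this
  · simp; omega

theorem qcp_meas_sum {Ω ι : Type*} [MeasurableSpace Ω] [Fintype ι] (f g : ι → Ω → ℝ)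
    (hf : ∀ i, Measurable (f i)) (hg : ∀ i, Measurable (g i)) :
    Measurable fun w => ∑ i, if f i w < g i w then (1 : ℕ) else 0 :=
  Finset.measurable_sum _ fun i _ =>
    Measurable.ite (measurableSet_lt (hf i) (hg i)) measurable_const measurable_const

theorem qcp_kth_lt {n : ℕ} (f : Fin n → ℝ) (k : ℕ) (hk1 : 1 ≤ k) (hk : k ≤ n) (c : ℝ) :
    kthSmallest (List.ofFn f) k < c ↔ k ≤ ∑ i, if f i < c then 1 else 0 := by
  have := qcp_kth (fun x => decide (x < c))
    (by intro a b h; simpa using lt_of_le_of_lt h) f k hk1 hk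
  simpa only [decide_eq_true_eq] using this

theorem qcp_kth_measurable {Ω : Type*} [MeasurableSpace Ω] {n : ℕ} (f : Fin n → Ω → ℝ)
    (hf : ∀ i, Measurable (f i)) (k : ℕ) (hk1 : 1 ≤ k) (hk : k ≤ n) :
    Measurable fun w => kthSmallest (List.ofFn fun i => f i w) k := by
  refine measurable_of_Iio fun c => ?_
  have : (fun w => kthSmallest (List.ofFn fun i => f i w) k) ⁻¹' Set.Iio c
      = (fun w => ∑ i, if f i w < c then (1 : ℕ) else 0) ⁻¹' Set.Ici k := by
    ext w
    simp only [Set.mem_preimage, Set.mem_Iio, Set.mem_Ici]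
    exact qcp_kth_lt _ k hk1 hk c
  rw [this]
  exact qcp_meas_sum f (fun _ _ => c) hf (fun _ => measurable_const) measurableSet_Ici

theorem qcp_comb {m n : ℕ} (hn : n ≤ m) (s : Fin m → ℝ) :
    n ≤ ∑ i, if (∑ j, if s j < s i then 1 else 0) < n then 1 else 0 := by
  classical
  simp only [Finset.sum_boole, Nat.cast_id]
  have hmono := Tuple.monotone_sort s
  set σ := Tuple.sort s
  have key : ∀ i : Fin m, (i : ℕ) < n → (Finset.univ.filter fun j => s j < s (σ i)).card < n := by
    intro i hi
    refine lt_of_le_of_lt ?_ hi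
    have : (Finset.univ.filter fun j => s j < s (σ i)) ⊆ (Finset.Iio i).image σ := by
      intro j hj
      rw [Finset.mem_filter] at hj
      rw [Finset.mem_image]
      refine ⟨σ.symm j, ?_, by simp⟩
      rw [Finset.mem_Iio]
      by_contra hc
      have := hmono (not_lt.1 hc)
      simp only [Function.comp, Equiv.apply_symm_apply] at this
      exact absurd hj.2 (not_lt.2 this)
    calc _ ≤ _ := Finset.card_le_card this
      _ ≤ _ := Finset.card_image_le
      _ = i := by simp
  have hsub : (Finset.univ : Finset (Fin n)).image (fun i => σ (Fin.castLE hn i)) ⊆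
      Finset.univ.filter fun i => (Finset.univ.filter fun j => s j < s i).card < n := by
    intro a ha
    rw [Finset.mem_image] at ha
    obtain ⟨i, -, rfl⟩ := ha
    rw [Finset.mem_filter]
    exact ⟨Finset.mem_univ _, key _ (by simp)⟩
  have := Finset.card_le_card hsub
  rw [Finset.card_image_of_injective (f := fun i => σ (Fin.castLE hn i)) _ (σ.injective.comp (Fin.castLE_injective hn))] at this
  simpa using this

theorem qcp_bind {X : Type*} [MeasurableSpace X]
    (N M : ℕ) (κ : Kernel X (Fin M → ℝ)) [IsMarkovKernel κ]
    (ν : Measure (X × ℝ)) [IsProbabilityMeasure ν] :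
      ((Measure.pi fun _ : Fin (N + 1) => ν).bind fun zs =>
        Measure.map
          (fun (yh : Fin (N + 1) → Fin M → ℝ) (i : Fin (N + 1)) => (zs i, yh i))
          (Measure.pi fun i => κ (zs i).1)) =
      Measure.pi fun _ : Fin (N + 1) => ν.compProd (κ.comap Prod.fst measurable_fst) := by
  set η : Kernel (X × ℝ) (Fin M → ℝ) := κ.comap Prod.fst measurable_fst with hη
  have hmp : ∀ zs : Fin (N + 1) → X × ℝ, Measurable
      (fun (yh : Fin (N + 1) → Fin M → ℝ) (i : Fin (N + 1)) => (zs i, yh i)) := by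
    intro zs; fun_prop
  have hrect : ∀ (zs : Fin (N + 1) → X × ℝ) (t : Fin (N + 1) → Set ((X × ℝ) × (Fin M → ℝ))),
      (∀ i, MeasurableSet (t i)) →
      Measure.map
          (fun (yh : Fin (N + 1) → Fin M → ℝ) (i : Fin (N + 1)) => (zs i, yh i))
          (Measure.pi fun i => κ (zs i).1) (Set.pi Set.univ t)
        = ∏ i, η (zs i) (Prod.mk (zs i) ⁻¹' t i) := by
    intro zs t ht
    rw [Measure.map_apply (hmp zs) (MeasurableSet.univ_pi ht)]
    have : (fun (yh : Fin (N + 1) → Fin M → ℝ) (i : Fin (N + 1)) => (zs i, yh i)) ⁻¹'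
        (Set.pi Set.univ t) = Set.pi Set.univ fun i => Prod.mk (zs i) ⁻¹' t i := by
      ext; simp
    rw [this, Measure.pi_pi]
    rfl
  have hηm : ∀ t : Set ((X × ℝ) × (Fin M → ℝ)), MeasurableSet t →
      Measurable fun z => η z (Prod.mk z ⁻¹' t) := fun t ht =>
    Kernel.measurable_kernel_prodMk_left ht
  have hmeas : Measurable fun zs : Fin (N + 1) → X × ℝ => Measure.map
          (fun (yh : Fin (N + 1) → Fin M → ℝ) (i : Fin (N + 1)) => (zs i, yh i))
          (Measure.pi fun i => κ (zs i).1) := by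
    haveI : ∀ zs : Fin (N + 1) → X × ℝ, IsProbabilityMeasure (Measure.map
          (fun (yh : Fin (N + 1) → Fin M → ℝ) (i : Fin (N + 1)) => (zs i, yh i))
          (Measure.pi fun i => κ (zs i).1)) := fun zs =>
      Measure.isProbabilityMeasure_map (hmp zs).aemeasurable
    refine Measurable.measure_of_isPiSystem_of_isProbabilityMeasure generateFrom_pi.symm
      isPiSystem_pi ?_
    rintro _ ⟨t, ht, rfl⟩
    have ht' : ∀ i, MeasurableSet (t i) := fun i => ht i (Set.mem_univ i)
    simp_rw [hrect _ t ht']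
    exact Finset.measurable_prod _ fun i _ => (hηm _ (ht' i)).comp (measurable_pi_apply i)
  symm
  refine Measure.pi_eq fun t ht => ?_
  rw [Measure.bind_apply (MeasurableSet.univ_pi ht) hmeas.aemeasurable]
  simp_rw [hrect _ t ht]
  have hind : iIndepFun (fun (i : Fin (N + 1)) (zs : Fin (N + 1) → X × ℝ) =>
      η (zs i) (Prod.mk (zs i) ⁻¹' t i)) (Measure.pi fun _ => ν) :=
    iIndepFun_pi (X := fun i z => η z (Prod.mk z ⁻¹' t i)) fun i => (hηm _ (ht i)).aemeasurable
  rw [lintegral_prod_eq_prod_lintegral_of_indepFun Finset.univ _ hind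
    fun i => (hηm _ (ht i)).comp (measurable_pi_apply i)]
  refine Finset.prod_congr rfl fun i _ => ?_
  rw [Measure.compProd_apply (ht i)]
  exact (measurePreserving_eval (fun _ : Fin (N + 1) => ν) i).lintegral_comp (hηm _ (ht i))

theorem qcp_exch {Z : Type*} [MeasurableSpace Z] (μ : Measure Z) [IsProbabilityMeasure μ]
    (N n : ℕ) (hn : n ≤ N + 1) (s : Z → ℝ) (hs : Measurable s) :
    (n : ENNReal) ≤ (N + 1 : ℕ) * (Measure.pi fun _ : Fin (N + 1) => μ)
      {w | (∑ j, if s (w j) < s (w (Fin.last N)) then 1 else 0) < n} := by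
  set P := Measure.pi fun _ : Fin (N + 1) => μ
  set G : Fin (N + 1) → Set (Fin (N + 1) → Z) := fun i =>
    {w | (∑ j, if s (w j) < s (w i) then 1 else 0) < n} with hG
  have hGm : ∀ i, MeasurableSet (G i) := fun i =>
    qcp_meas_sum (Ω := Fin (N + 1) → Z) (fun j w => s (w j)) (fun _ w => s (w i)) (fun j => by fun_prop)
      (fun j => by fun_prop) (measurableSet_Iio (a := n))
  have hsym : ∀ i, P (G i) = P (G (Fin.last N)) := by
    intro i
    let e : Fin (N + 1) ≃ Fin (N + 1) := Equiv.swap i (Fin.last N)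
    have hmp := measurePreserving_piCongrLeft (fun _ : Fin (N + 1) => μ) e
    have := hmp.measure_preimage (hGm i).nullMeasurableSet
    rw [← this]
    congr 1
    ext w
    have happ : ∀ j, MeasurableEquiv.piCongrLeft (fun _ : Fin (N + 1) => Z) e w j = w (e j) := by
      intro j
      have := MeasurableEquiv.piCongrLeft_apply_apply e (β := fun _ => Z) w (e j)
      simpa [e] using this
    simp only [hG, Set.mem_preimage, Set.mem_ofPred_eq, happ]
    rw [Equiv.sum_comp e (fun j => if s (w j) < s (w (e i)) then 1 else 0)]
    simp [e]
  have hsum : ∑ i, P (G i) = (N + 1 : ℕ) * P (G (Fin.last N)) := by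
    simp [hsym]
  rw [← hsum]
  have : ∀ i, P (G i) = ∫⁻ w, (G i).indicator 1 w ∂P := fun i =>
    (lintegral_indicator_one (hGm i)).symm
  simp_rw [this]
  rw [← lintegral_finsetSum _ fun i _ => (measurable_one.indicator (hGm i))]
  calc (n : ENNReal) = ∫⁻ w, (n : ENNReal) ∂P := by simp
    _ ≤ _ := by
      refine lintegral_mono fun w => ?_
      have h := qcp_comb hn (fun i => s (w i))
      have h2 : (n : ENNReal) ≤ ((∑ i, if (∑ j, if s (w j) < s (w i) then 1 else 0) < n
        then 1 else 0 : ℕ) : ENNReal) := by exact_mod_cast h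
      refine h2.trans (le_of_eq ?_)
      push_cast
      refine Finset.sum_congr rfl fun i _ => ?_
      simp [hG, Set.indicator_apply]

/-- Calibration of quantum conformal prediction (QCP) for regression: the pairs
`(x i, y i) ∈ X × ℝ`, `i = 1, …, N+1`, are i.i.d. with law `ν`; conditionally
independently given the pairs, each point `i` receives an `M`-tuple of predictions
drawn (jointly, allowing arbitrary correlation and drift across the `M` shots) from
the Markov kernel `κ` evaluated at its input. With the `k`-NN score
`s(y, ŷ) = (k-th smallest of |y - ŷ m|, m = 1, …, M)` and `Q` the
`⌈(1-α)(N+1)⌉`-th smallest calibration score, the QCP set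
`Γ_M(x) = {y' | s(y', ŷ) ≤ Q}` covers the test label with probability
at least `1 - α`. -/
theorem qcp_regression_calibration
    {X : Type*} [MeasurableSpace X]
    (N M : ℕ) (κ : Kernel X (Fin M → ℝ)) [IsMarkovKernel κ]
    (k : ℕ) (hk1 : 1 ≤ k) (hk2 : k ≤ M)
    (ν : Measure (X × ℝ)) [IsProbabilityMeasure ν]
    (α : ℝ) (hα0 : 0 < α) (hα1 : α < 1) (hαN : 1 / ((N : ℝ) + 1) ≤ α) :
    ENNReal.ofReal (1 - α) ≤
      ((Measure.pi fun _ : Fin (N + 1) => ν).bind fun zs =>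
        Measure.map
          (fun (yh : Fin (N + 1) → Fin M → ℝ) (i : Fin (N + 1)) => (zs i, yh i))
          (Measure.pi fun i => κ (zs i).1))
      {w : Fin (N + 1) → (X × ℝ) × (Fin M → ℝ) |
        (w (Fin.last N)).1.2 ∈
          {y' : ℝ |
            kthSmallest (List.ofFn fun m : Fin M => |y' - (w (Fin.last N)).2 m|) k ≤
              kthSmallest
                (List.ofFn fun i : Fin N =>
                  kthSmallest
                    (List.ofFn fun m : Fin M => |(w i.castSucc).1.2 - (w i.castSucc).2 m|) k)
                ⌈(1 - α) * ((N : ℝ) + 1)⌉₊}} := by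
  rw [qcp_bind]
  have hN : (0 : ℝ) < (N : ℝ) + 1 := by positivity
  set n := ⌈(1 - α) * ((N : ℝ) + 1)⌉₊ with hndef
  have hn1 : 1 ≤ n := Nat.ceil_pos.2 (mul_pos (by linarith) hN)
  have hnN : n ≤ N := by
    rw [hndef, Nat.ceil_le]
    rw [div_le_iff₀ hN] at hαN
    linarith
  have hnle : (1 - α) * ((N : ℝ) + 1) ≤ n := Nat.le_ceil _
  let s : (X × ℝ) × (Fin M → ℝ) → ℝ := fun z =>
    kthSmallest (List.ofFn fun m : Fin M => |z.1.2 - z.2 m|) k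
  have hs : Measurable s :=
    qcp_kth_measurable (fun m (z : (X × ℝ) × (Fin M → ℝ)) => |z.1.2 - z.2 m|)
      (fun m => by
        have h1 : Measurable fun z : (X × ℝ) × (Fin M → ℝ) => z.1.2 - z.2 m := by fun_prop
        exact h1.abs) k hk1 hk2
  have hmain := qcp_exch (ν.compProd (κ.comap Prod.fst measurable_fst)) N n (by omega) s hs
  have hset : {w : Fin (N + 1) → (X × ℝ) × (Fin M → ℝ) |
        (w (Fin.last N)).1.2 ∈
          {y' : ℝ |
            kthSmallest (List.ofFn fun m : Fin M => |y' - (w (Fin.last N)).2 m|) k ≤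
              kthSmallest
                (List.ofFn fun i : Fin N =>
                  kthSmallest
                    (List.ofFn fun m : Fin M => |(w i.castSucc).1.2 - (w i.castSucc).2 m|) k)
                n}} =
      {w | (∑ j, if s (w j) < s (w (Fin.last N)) then 1 else 0) < n} := by
    ext w
    have h := qcp_kth_lt (fun i : Fin N => s (w i.castSucc)) n hn1 hnN (s (w (Fin.last N)))
    simp only [Set.mem_ofPred_eq]
    rw [Fin.sum_univ_castSucc, if_neg (lt_irrefl _), add_zero, ← not_le, ← h, not_lt]
  rw [hset]
  set p := (Measure.pi fun _ : Fin (N + 1) => ν.compProd (κ.comap Prod.fst measurable_fst))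
    {w | (∑ j, if s (w j) < s (w (Fin.last N)) then 1 else 0) < n}
  have hp : p ≠ ⊤ := measure_ne_top _ _
  rw [ENNReal.ofReal_le_iff_le_toReal hp]
  have h3 := ENNReal.toReal_mono (by finiteness) hmain
  rw [ENNReal.toReal_mul, ENNReal.toReal_natCast, ENNReal.toReal_natCast] at h3
  push_cast at h3
  refine le_of_mul_le_mul_right ?_ hN
  linarith
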